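/- arXiv:1402.4715 — 2 statements merged into one kernel-verified Lean document; each statement's English description precedes it below -/
import Mathlib

section
/- The matrix B has an orthogonal basis of eigenvectors such that exactly ν−1 of them lie in the kernel of B, exactly one of the remaining eigenvectors has eigenvalue lying between rω^{ν−1}νk^{ν−1} and Rνk^{ν−1}, and all other eigenvalues lie between rω^{ν−1}k^{ν−1} and Rk^{ν−1}. -/
open MeasureTheory Real InnerProductSpace

noncomputable section

variable {ν : ℕ}

/-- The coordinate index set of `ℝ^d`, `d = k_1 + ⋯ + k_ν`. -/
abbrev Idx (kk : Fin ν → ℕ) : Type := Σ j : Fin ν, Fin (kk j)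

/-- The multi-index set, of cardinality `n = k_1 ⋯ k_ν`. -/
abbrev MIdx (kk : Fin ν → ℕ) : Type := ∀ j : Fin ν, Fin (kk j)

/-- The ambient Euclidean space `ℝ^d`. -/
abbrev Spc (kk : Fin ν → ℕ) : Type := EuclideanSpace ℝ (Idx kk)

/-- The coordinate functional `t ↦ τ_{j,i}`. -/
def coordL (kk : Fin ν → ℕ) (p : Idx kk) : Spc kk →ₗ[ℝ] ℝ where
  toFun t := t p
  map_add' _ _ := rfl
  map_smul' _ _ := rfl

/-- The linear functional `t ↦ ⟨a_m, t⟩ = τ_{1,m_1} + ⋯ + τ_{ν,m_ν}`. -/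
def linF (kk : Fin ν → ℕ) (m : MIdx kk) : Spc kk →ₗ[ℝ] ℝ :=
  ∑ j : Fin ν, coordL kk ⟨j, m j⟩

/-- The column `a_m` of the constraint matrix `A`. -/
def colA (kk : Fin ν → ℕ) (m : MIdx kk) : Spc kk :=
  (WithLp.equiv 2 (Idx kk → ℝ)).symm (fun p => if p.2 = m p.1 then 1 else 0)

/-- The quadratic form `q(t) = (1/2) ∑_m α_m (τ_{1,m_1} + ⋯ + τ_{ν,m_ν})²`. -/
def qform (kk : Fin ν → ℕ) (α : MIdx kk → ℝ) (t : Spc kk) : ℝ :=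
  (1/2) * ∑ m : MIdx kk, α m * (linF kk m t)^2

/-- The symmetric positive semidefinite matrix `B` with `q(t) = (1/2)⟨t, Bt⟩`,
given explicitly as `B = ∑_m α_m a_m a_mᵀ`. -/
def Bmat (kk : Fin ν → ℕ) (α : MIdx kk → ℝ) : Spc kk →ₗ[ℝ] Spc kk :=
  ∑ m : MIdx kk, α m • (linF kk m).smulRight (colA kk m)

/-- The sup norm `‖t‖_∞`. -/
def supNorm (kk : Fin ν → ℕ) (t : Spc kk) : ℝ := ‖(WithLp.equiv 2 (Idx kk → ℝ)) t‖

/-- The subspace `ℒ = {t : τ_{j,k_j} = 0 for j = 2,…,ν}`. -/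
def Lsub (kk : Fin ν → ℕ) (hk : ∀ j, 0 < kk j) : Submodule ℝ (Spc kk) :=
  ⨅ (j : {j : Fin ν // (j : ℕ) ≠ 0}),
    LinearMap.ker (coordL kk ⟨j.1, ⟨kk j.1 - 1, Nat.sub_lt (hk j.1) one_pos⟩⟩)

section HelperLemmas

theorem linF_apply (kk : Fin ν → ℕ) (m : MIdx kk) (t : Spc kk) :
    linF kk m t = ∑ j, t ⟨j, m j⟩ := by
  rw [linF, LinearMap.sum_apply]
  rfl

theorem inner_colA (kk : Fin ν → ℕ) (m : MIdx kk) (t : Spc kk) :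
    ⟪t, colA kk m⟫_ℝ = linF kk m t := by
  rw [linF_apply, PiLp.inner_apply, Fintype.sum_sigma]
  refine Finset.sum_congr rfl fun j _ => ?_
  simp [colA]

theorem inner_Bmat (kk : Fin ν → ℕ) (α : MIdx kk → ℝ) (x y : Spc kk) :
    ⟪x, Bmat kk α y⟫_ℝ = ∑ m, α m * (linF kk m x * linF kk m y) := by
  simp only [Bmat, LinearMap.sum_apply, LinearMap.smul_apply, LinearMap.smulRight_apply,
    inner_sum, inner_smul_right, inner_colA]
  refine Finset.sum_congr rfl fun m _ => ?_
  ring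

theorem Bmat_symm (kk : Fin ν → ℕ) (α : MIdx kk → ℝ) : (Bmat kk α).IsSymmetric := by
  intro x y
  rw [real_inner_comm, inner_Bmat, inner_Bmat]
  refine Finset.sum_congr rfl fun m _ => ?_
  ring

/-- unweighted form -/
def Qz (kk : Fin ν → ℕ) (t : Spc kk) : ℝ := ∑ m : MIdx kk, (linF kk m t) ^ 2

def Sm (kk : Fin ν → ℕ) (j : Fin ν) : Spc kk →ₗ[ℝ] ℝ := ∑ i : Fin (kk j), coordL kk ⟨j, i⟩

theorem Sm_apply (kk : Fin ν → ℕ) (j : Fin ν) (t : Spc kk) : Sm kk j t = ∑ i, t ⟨j, i⟩ := by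
  rw [Sm, LinearMap.sum_apply]
  rfl

theorem norm_sq_spc (kk : Fin ν → ℕ) (t : Spc kk) : ‖t‖ ^ 2 = ∑ j, ∑ i, t ⟨j, i⟩ ^ 2 := by
  rw [EuclideanSpace.norm_sq_eq, Fintype.sum_sigma]
  simp

theorem prodF (kk : Fin ν → ℕ) (hk : ∀ j, 0 < kk j) (F : ∀ j, Fin (kk j) → ℝ) :
    ∑ m : MIdx kk, ∏ j, F j (m j) = (∏ j, (kk j : ℝ)) * ∏ j, ((∑ i, F j i) / kk j) := by
  rw [← Finset.prod_mul_distrib, ← Fintype.piFinset_univ, ← Finset.prod_univ_sum]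
  refine Finset.prod_congr rfl fun j _ => ?_
  have : (kk j : ℝ) ≠ 0 := by exact_mod_cast (hk j).ne'
  field_simp

theorem moment1 (kk : Fin ν → ℕ) (hk : ∀ j, 0 < kk j) (j : Fin ν) (f : Fin (kk j) → ℝ) :
    ∑ m : MIdx kk, f (m j) = (∏ j, (kk j : ℝ)) * ((∑ i, f i) / kk j) := by
  have h := prodF kk hk (Function.update (fun _ _ => 1) j f)
  have h1 : ∀ m : MIdx kk, ∏ l, (Function.update (fun _ _ => (1:ℝ)) j f :
      ∀ j, Fin (kk j) → ℝ) l (m l) = f (m j) := by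
    intro m
    rw [Fintype.prod_eq_single j]
    · simp
    · intro x hx; simp [Function.update_of_ne hx]
  simp only [h1] at h
  rw [h]
  congr 1
  rw [Fintype.prod_eq_single j]
  · simp
  · intro x hx
    have : (kk x : ℝ) ≠ 0 := by exact_mod_cast (hk x).ne'
    simp [Function.update_of_ne hx, this]

theorem moment2 (kk : Fin ν → ℕ) (hk : ∀ j, 0 < kk j) (j l : Fin ν) (hjl : j ≠ l)
    (f : Fin (kk j) → ℝ) (g : Fin (kk l) → ℝ) :
    ∑ m : MIdx kk, f (m j) * g (m l) =
      (∏ j, (kk j : ℝ)) * (((∑ i, f i) / kk j) * ((∑ i, g i) / kk l)) := by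
  have h := prodF kk hk (Function.update (Function.update (fun _ _ => 1) j f) l g)
  have h1 : ∀ m : MIdx kk, ∏ x, (Function.update (Function.update (fun _ _ => (1:ℝ)) j f) l g :
      ∀ j, Fin (kk j) → ℝ) x (m x) = f (m j) * g (m l) := by
    intro m
    rw [Fintype.prod_eq_mul j l hjl]
    · simp [Function.update_of_ne hjl]
    · rintro x ⟨hx, hx'⟩; simp [Function.update_of_ne hx, Function.update_of_ne hx']
  simp only [h1] at h
  rw [h]
  congr 1
  rw [Fintype.prod_eq_mul j l hjl]
  · simp [Function.update_of_ne hjl]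
  · rintro x ⟨hx, hx'⟩
    have : (kk x : ℝ) ≠ 0 := by exact_mod_cast (hk x).ne'
    simp [Function.update_of_ne hx, Function.update_of_ne hx', this]

theorem Qz_eq (kk : Fin ν → ℕ) (hk : ∀ j, 0 < kk j) (t : Spc kk) :
    Qz kk t = (∏ j, (kk j : ℝ)) * ((∑ j, Sm kk j t / kk j) ^ 2 - ∑ j, (Sm kk j t / kk j) ^ 2)
      + ∑ j, ((∏ j, (kk j : ℝ)) / kk j) * ∑ i, t ⟨j, i⟩ ^ 2 := by
  have e1 : Qz kk t = ∑ j, ∑ l, ∑ m : MIdx kk, t ⟨j, m j⟩ * t ⟨l, m l⟩ := by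
    simp only [Qz, linF_apply, pow_two, Finset.sum_mul_sum]
    rw [Finset.sum_comm]
    refine Finset.sum_congr rfl fun j _ => ?_
    rw [Finset.sum_comm]
  have e2 : ∀ j l, ∑ m : MIdx kk, t ⟨j, m j⟩ * t ⟨l, m l⟩ =
      (∏ j, (kk j : ℝ)) * ((Sm kk j t / kk j) * (Sm kk l t / kk l)) +
      if j = l then ((∏ j, (kk j : ℝ)) / kk j) * ∑ i, t ⟨j, i⟩ ^ 2
        - (∏ j, (kk j : ℝ)) * (Sm kk j t / kk j) ^ 2 else 0 := by
    intro j l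
    by_cases hjl : j = l
    · subst hjl
      have := moment1 kk hk j (fun i => t ⟨j, i⟩ ^ 2)
      simp only [if_true]
      simp only [pow_two] at this ⊢
      rw [this]
      ring
    · rw [if_neg hjl, moment2 kk hk j l hjl (fun i => t ⟨j, i⟩) (fun i => t ⟨l, i⟩),
        Sm_apply, Sm_apply, add_zero]
  rw [e1]
  simp only [e2, Finset.sum_add_distrib, Finset.sum_ite_eq, Finset.mem_univ, if_true,
    Finset.sum_sub_distrib, ← Finset.mul_sum, ← Finset.sum_mul]
  ring

theorem Qz_le (kk : Fin ν → ℕ) (hk : ∀ j, 0 < kk j) (b : ℝ)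
    (hb : ∀ j, (∏ j, (kk j : ℝ)) / kk j ≤ b) (t : Spc kk) :
    Qz kk t ≤ ν * b * ‖t‖ ^ 2 := by
  have h1 : Qz kk t ≤ ∑ m : MIdx kk, ν * ∑ j, t ⟨j, m j⟩ ^ 2 := by
    refine Finset.sum_le_sum fun m _ => ?_
    rw [linF_apply]
    simpa using sq_sum_le_card_mul_sum_sq (s := Finset.univ) (f := fun j => t ⟨j, m j⟩)
  rw [← Finset.mul_sum, Finset.sum_comm] at h1
  rw [norm_sq_spc, mul_assoc]
  refine h1.trans (mul_le_mul_of_nonneg_left ?_ (by positivity))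
  rw [Finset.mul_sum]
  refine Finset.sum_le_sum fun j _ => ?_
  rw [moment1 kk hk j (fun i => t ⟨j, i⟩ ^ 2), mul_div_assoc', mul_div_right_comm]
  exact mul_le_mul_of_nonneg_right (hb j) (Finset.sum_nonneg fun _ _ => sq_nonneg _)

theorem Qz_le' (kk : Fin ν → ℕ) (hk : ∀ j, 0 < kk j) (b : ℝ)
    (hb : ∀ j, (∏ j, (kk j : ℝ)) / kk j ≤ b) (t : Spc kk)
    (ht : ∑ j, Sm kk j t / kk j = 0) :
    Qz kk t ≤ b * ‖t‖ ^ 2 := by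
  rw [Qz_eq kk hk, ht, norm_sq_spc, Finset.mul_sum]
  have h1 : 0 ≤ (∏ j, (kk j : ℝ)) * ∑ j, (Sm kk j t / kk j) ^ 2 := by positivity
  have h2 : ∑ j, ((∏ j, (kk j : ℝ)) / kk j) * ∑ i, t ⟨j, i⟩ ^ 2 ≤ ∑ j, b * ∑ i, t ⟨j, i⟩ ^ 2 := by
    refine Finset.sum_le_sum fun j _ => ?_
    exact mul_le_mul_of_nonneg_right (hb j) (Finset.sum_nonneg fun _ _ => sq_nonneg _)
  linarith

theorem le_Qz (kk : Fin ν → ℕ) (hk : ∀ j, 0 < kk j) (a : ℝ)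
    (ha : ∀ j, a ≤ (∏ j, (kk j : ℝ)) / kk j) (t : Spc kk) (S : ℝ)
    (ht : ∀ j, Sm kk j t = S) :
    a * ‖t‖ ^ 2 ≤ Qz kk t := by
  rw [Qz_eq kk hk, norm_sq_spc, Finset.mul_sum]
  have h1 : ∑ j, (Sm kk j t / kk j) ^ 2 ≤ (∑ j, Sm kk j t / kk j) ^ 2 := by
    simp only [ht, div_eq_mul_inv, ← Finset.mul_sum, mul_pow]
    refine mul_le_mul_of_nonneg_left ?_ (sq_nonneg _)
    exact Finset.sum_sq_le_sq_sum_of_nonneg (fun _ _ => by positivity)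
  have h2 : ∑ j, a * ∑ i, t ⟨j, i⟩ ^ 2 ≤ ∑ j, ((∏ j, (kk j : ℝ)) / kk j) * ∑ i, t ⟨j, i⟩ ^ 2 := by
    refine Finset.sum_le_sum fun j _ => ?_
    exact mul_le_mul_of_nonneg_right (ha j) (Finset.sum_nonneg fun _ _ => sq_nonneg _)
  have h3 : 0 ≤ (∏ j, (kk j : ℝ)) := by positivity
  nlinarith [mul_nonneg h3 (sub_nonneg.2 h1)]

def wvec (kk : Fin ν → ℕ) : Spc kk := WithLp.toLp 2 (fun p => 1 / (kk p.1 : ℝ))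

theorem le_Qz_w (kk : Fin ν → ℕ) (hk : ∀ j, 0 < kk j) (a : ℝ)
    (ha : ∀ j, a ≤ (∏ j, (kk j : ℝ)) / kk j) :
    ν * a * ‖wvec kk‖ ^ 2 ≤ Qz kk (wvec kk) := by
  have hk' : ∀ j, (kk j : ℝ) ≠ 0 := fun j => by exact_mod_cast (hk j).ne'
  have hn : ‖wvec kk‖ ^ 2 = ∑ j, 1 / (kk j : ℝ) := by
    rw [norm_sq_spc]
    refine Finset.sum_congr rfl fun j _ => ?_
    have := hk' j
    simp [wvec]
    field_simp
  have hS : ∀ m, linF kk m (wvec kk) = ∑ j, 1 / (kk j : ℝ) := by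
    intro m; rw [linF_apply]; simp [wvec]
  have hQ : Qz kk (wvec kk) = (∏ j, (kk j : ℝ)) * (∑ j, 1 / (kk j : ℝ)) ^ 2 := by
    simp [Qz, hS, Fintype.card_pi]
  rw [hQ, hn, pow_two, ← mul_assoc]
  refine mul_le_mul_of_nonneg_right ?_ (Finset.sum_nonneg fun _ _ => by positivity)
  rw [Finset.mul_sum]
  calc (ν : ℝ) * a = ∑ j : Fin ν, a := by simp
    _ ≤ _ := Finset.sum_le_sum fun j _ => by rw [mul_one_div]; exact ha j

/-- dimension-counting -/
theorem exists_vec {E : Type*} [NormedAddCommGroup E] [InnerProductSpace ℝ E]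
    [FiniteDimensional ℝ E] {n : ℕ} (v : Fin n → E) (U : Submodule ℝ E) (s : Finset (Fin n))
    (h : s.card < Module.finrank ℝ U) :
    ∃ t ∈ U, t ≠ 0 ∧ ∀ j ∈ s, ⟪v j, t⟫_ℝ = 0 := by
  let f : U →ₗ[ℝ] (s → ℝ) := LinearMap.pi fun j => (innerₛₗ ℝ (v j)).comp U.subtype
  have hf : LinearMap.ker f ≠ ⊥ := LinearMap.ker_ne_bot_of_finrank_lt (by simpa using h)
  obtain ⟨⟨y, hy⟩, hy1, hy0⟩ := (Submodule.ne_bot_iff _).mp hf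
  refine ⟨y, hy, fun h => hy0 (by ext; simpa using h), fun j hj => ?_⟩
  have := congrFun (LinearMap.mem_ker.1 hy1) ⟨j, hj⟩
  simpa [f] using this

theorem inner_T {E : Type*} [NormedAddCommGroup E] [InnerProductSpace ℝ E]
    [FiniteDimensional ℝ E] {n : ℕ} {T : E →ₗ[ℝ] E} (hT : T.IsSymmetric)
    (hn : Module.finrank ℝ E = n) (t : E) :
    ⟪t, T t⟫_ℝ = ∑ j, hT.eigenvalues hn j * ⟪hT.eigenvectorBasis hn j, t⟫_ℝ ^ 2 := by
  rw [← OrthonormalBasis.sum_inner_mul_inner (hT.eigenvectorBasis hn)]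
  refine Finset.sum_congr rfl fun j _ => ?_
  rw [← hT, hT.apply_eigenvectorBasis, real_inner_comm]
  simp [inner_smul_left]
  ring

theorem norm_T {E : Type*} [NormedAddCommGroup E] [InnerProductSpace ℝ E]
    [FiniteDimensional ℝ E] {n : ℕ} {T : E →ₗ[ℝ] E} (hT : T.IsSymmetric)
    (hn : Module.finrank ℝ E = n) (t : E) :
    ‖t‖ ^ 2 = ∑ j, ⟪hT.eigenvectorBasis hn j, t⟫_ℝ ^ 2 := by
  rw [← real_inner_self_eq_norm_sq, ← OrthonormalBasis.sum_inner_mul_inner (hT.eigenvectorBasis hn)]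
  refine Finset.sum_congr rfl fun j _ => ?_
  rw [real_inner_comm, pow_two]

theorem eig_le {E : Type*} [NormedAddCommGroup E] [InnerProductSpace ℝ E]
    [FiniteDimensional ℝ E] {n : ℕ} {T : E →ₗ[ℝ] E} (hT : T.IsSymmetric)
    (hn : Module.finrank ℝ E = n) (U : Submodule ℝ E) (C : ℝ) (i : Fin n)
    (hU : n < Module.finrank ℝ U + (i + 1)) (h : ∀ t ∈ U, ⟪t, T t⟫_ℝ ≤ C * ‖t‖ ^ 2) :
    hT.eigenvalues hn i ≤ C := by
  obtain ⟨t, htU, ht0, ht⟩ := exists_vec (hT.eigenvectorBasis hn) U (Finset.Ioi i)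
    (by rw [Fin.card_Ioi]; omega)
  have h1 : hT.eigenvalues hn i * ‖t‖ ^ 2 ≤ ⟪t, T t⟫_ℝ := by
    rw [inner_T hT hn, norm_T hT hn, Finset.mul_sum]
    refine Finset.sum_le_sum fun j _ => ?_
    by_cases hj : i < j
    · simp [ht j (Finset.mem_Ioi.2 hj)]
    · exact mul_le_mul_of_nonneg_right (hT.eigenvalues_antitone hn (not_lt.1 hj)) (sq_nonneg _)
  have h2 : 0 < ‖t‖ ^ 2 := by positivity
  exact le_of_mul_le_mul_right (h1.trans (h t htU)) h2

theorem le_eig {E : Type*} [NormedAddCommGroup E] [InnerProductSpace ℝ E]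
    [FiniteDimensional ℝ E] {n : ℕ} {T : E →ₗ[ℝ] E} (hT : T.IsSymmetric)
    (hn : Module.finrank ℝ E = n) (U : Submodule ℝ E) (C : ℝ) (i : Fin n)
    (hU : i < Module.finrank ℝ U) (h : ∀ t ∈ U, C * ‖t‖ ^ 2 ≤ ⟪t, T t⟫_ℝ) :
    C ≤ hT.eigenvalues hn i := by
  obtain ⟨t, htU, ht0, ht⟩ := exists_vec (hT.eigenvectorBasis hn) U (Finset.Iio i)
    (by rw [Fin.card_Iio]; omega)
  have h1 : ⟪t, T t⟫_ℝ ≤ hT.eigenvalues hn i * ‖t‖ ^ 2 := by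
    rw [inner_T hT hn, norm_T hT hn, Finset.mul_sum]
    refine Finset.sum_le_sum fun j _ => ?_
    by_cases hj : j < i
    · simp [ht j (Finset.mem_Iio.2 hj)]
    · exact mul_le_mul_of_nonneg_right (hT.eigenvalues_antitone hn (not_lt.1 hj)) (sq_nonneg _)
  have h2 : 0 < ‖t‖ ^ 2 := by positivity
  exact le_of_mul_le_mul_right ((h t htU).trans h1) h2

theorem finrank_le_ker_add {V W : Type*} [AddCommGroup V] [Module ℝ V] [AddCommGroup W]
    [Module ℝ W] [FiniteDimensional ℝ V] [FiniteDimensional ℝ W] (f : V →ₗ[ℝ] W) :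
    Module.finrank ℝ V ≤ Module.finrank ℝ (LinearMap.ker f) + Module.finrank ℝ W := by
  have h1 := f.finrank_range_add_finrank_ker
  have h2 := (LinearMap.range f).finrank_le
  omega

/-- block-constant vectors -/
def blockL (kk : Fin ν → ℕ) : (Fin ν → ℝ) →ₗ[ℝ] Spc kk where
  toFun c := WithLp.toLp 2 (fun p => c p.1)
  map_add' _ _ := rfl
  map_smul' _ _ := rfl

theorem blockL_inj (kk : Fin ν → ℕ) (hk : ∀ j, 0 < kk j) : Function.Injective (blockL kk) := by
  intro c c' h
  funext j
  exact congrArg (fun t : Spc kk => t ⟨j, ⟨0, hk j⟩⟩) h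

def sumL (ν : ℕ) : (Fin ν → ℝ) →ₗ[ℝ] ℝ := ∑ j, LinearMap.proj j

theorem finrank_K (kk : Fin ν → ℕ) (hk : ∀ j, 0 < kk j) :
    ν ≤ Module.finrank ℝ ((LinearMap.ker (sumL ν)).map (blockL kk)) + 1 := by
  have h1 := LinearMap.finrank_range_of_inj (f := (blockL kk).comp (LinearMap.ker (sumL ν)).subtype)
    ((blockL_inj kk hk).comp Subtype.val_injective)
  rw [LinearMap.range_comp, Submodule.range_subtype] at h1
  have h2 := finrank_le_ker_add (sumL ν)
  rw [Module.finrank_fin_fun, Module.finrank_self] at h2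
  omega

theorem linF_K (kk : Fin ν → ℕ) (t : Spc kk)
    (ht : t ∈ (LinearMap.ker (sumL ν)).map (blockL kk)) (m : MIdx kk) : linF kk m t = 0 := by
  obtain ⟨c, hc, rfl⟩ := ht
  rw [linF_apply]
  have h : sumL ν c = 0 := hc
  rw [sumL, LinearMap.sum_apply] at h
  exact h

theorem prod_div_bounds (kk : Fin ν → ℕ) (hk : ∀ j, 0 < kk j) (x k : ℝ) (hx : 0 ≤ x)
    (hlow : ∀ j, x ≤ kk j) (hhigh : ∀ j, (kk j : ℝ) ≤ k) (j : Fin ν) :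
    x ^ (ν - 1) ≤ (∏ j, (kk j : ℝ)) / kk j ∧ (∏ j, (kk j : ℝ)) / kk j ≤ k ^ (ν - 1) := by
  have h0 : (kk j : ℝ) ≠ 0 := by exact_mod_cast (hk j).ne'
  have h1 : (∏ j, (kk j : ℝ)) / kk j = ∏ l ∈ Finset.univ.erase j, (kk l : ℝ) := by
    rw [← Finset.mul_prod_erase _ _ (Finset.mem_univ j)]
    field_simp
  have hc : (Finset.univ.erase j).card = ν - 1 := by simp
  rw [h1, ← hc, ← Finset.prod_const, ← Finset.prod_const]
  exact ⟨Finset.prod_le_prod (fun _ _ => hx) (fun _ _ => hlow _),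
    Finset.prod_le_prod (fun _ _ => by positivity) (fun _ _ => hhigh _)⟩

theorem B_le (kk : Fin ν → ℕ) (α : MIdx kk → ℝ) (R : ℝ) (h : ∀ m, α m ≤ R) (t : Spc kk) :
    ⟪t, Bmat kk α t⟫_ℝ ≤ R * Qz kk t := by
  rw [inner_Bmat, Qz, Finset.mul_sum]
  refine Finset.sum_le_sum fun m _ => ?_
  rw [← pow_two]
  exact mul_le_mul_of_nonneg_right (h m) (sq_nonneg _)

theorem le_B (kk : Fin ν → ℕ) (α : MIdx kk → ℝ) (r : ℝ) (h : ∀ m, r ≤ α m) (t : Spc kk) :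
    r * Qz kk t ≤ ⟪t, Bmat kk α t⟫_ℝ := by
  rw [inner_Bmat, Qz, Finset.mul_sum]
  refine Finset.sum_le_sum fun m _ => ?_
  rw [← pow_two]
  exact mul_le_mul_of_nonneg_right (h m) (sq_nonneg _)

/-- the differences of consecutive block sums -/
def diffL (n : ℕ) (kk : Fin (n + 1) → ℕ) : Spc kk →ₗ[ℝ] (Fin n → ℝ) :=
  LinearMap.pi fun j => Sm kk j.succ - Sm kk 0

theorem diffL_ker (n : ℕ) (kk : Fin (n + 1) → ℕ) (t : Spc kk)
    (ht : t ∈ LinearMap.ker (diffL n kk)) (j : Fin (n + 1)) : Sm kk j t = Sm kk 0 t := by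
  refine Fin.cases rfl (fun i => ?_) j
  have := congrFun (LinearMap.mem_ker.1 ht) i
  simpa [diffL, sub_eq_zero] using this

/-- the reindexing -/
def reidx (d n : ℕ) (hd : n < d) (i : Fin d) : Fin d :=
  if h : (i : ℕ) < n then ⟨d - 1 - i, by omega⟩ else ⟨i - n, by omega⟩

theorem reidx_inj (d n : ℕ) (hd : n < d) : Function.Injective (reidx d n hd) := by
  intro i j h
  unfold reidx at h
  split_ifs at h <;> simp only [Fin.mk.injEq] at h <;> ext <;> omega

end HelperLemmas

/-- The matrix `B` has an orthogonal basis of eigenvectors such that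
exactly `ν−1` of them lie in the kernel of `B`, exactly one of the remaining eigenvectors
has eigenvalue between `r ω^{ν−1} ν k^{ν−1}` and `R ν k^{ν−1}`, and all other eigenvalues
lie between `r ω^{ν−1} k^{ν−1}` and `R k^{ν−1}`. -/
theorem statement3 (ν : ℕ) (hν : 2 ≤ ν) (kk : Fin ν → ℕ) (hkk : ∀ j, 2 ≤ kk j)
    (r R ω k : ℝ) (hr : 0 < r) (hrR : r ≤ R) (hω0 : 0 < ω) (hω1 : ω ≤ 1)
    (hωk : 1 ≤ ω * k) (hlow : ∀ j, ω * k ≤ kk j) (hhigh : ∀ j, (kk j : ℝ) ≤ k)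
    (α : MIdx kk → ℝ) (hα1 : ∀ m, r ≤ α m) (hα2 : ∀ m, α m ≤ R) :
    ∃ (v : Fin (∑ j, kk j) → Spc kk) (lam : Fin (∑ j, kk j) → ℝ),
      (∀ i, v i ≠ 0) ∧
      (∀ i i', i ≠ i' → ⟪v i, v i'⟫_ℝ = 0) ∧
      (∀ i, Bmat kk α (v i) = lam i • v i) ∧
      Submodule.span ℝ (Set.range v) = ⊤ ∧
      (∀ i : Fin (∑ j, kk j), (i : ℕ) < ν - 1 → v i ∈ LinearMap.ker (Bmat kk α)) ∧
      (∀ i : Fin (∑ j, kk j), (i : ℕ) = ν - 1 →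
        r * ω ^ (ν - 1) * ν * k ^ (ν - 1) ≤ lam i ∧ lam i ≤ R * ν * k ^ (ν - 1)) ∧
      (∀ i : Fin (∑ j, kk j), ν - 1 < (i : ℕ) →
        r * ω ^ (ν - 1) * k ^ (ν - 1) ≤ lam i ∧ lam i ≤ R * k ^ (ν - 1)) := by
  obtain ⟨n, rfl⟩ : ∃ n, ν = n + 1 := ⟨ν - 1, by omega⟩
  simp only [Nat.add_sub_cancel]
  have hk : ∀ j, 0 < kk j := fun j => by have := hkk j; omega
  have hk0 : 0 < k := by
    by_contra hc
    nlinarith [not_lt.1 hc]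
  have hR : 0 < R := hr.trans_le hrR
  have hB := Bmat_symm kk α
  have hn : Module.finrank ℝ (Spc kk) = ∑ j, kk j := by simp
  have hd : n < ∑ j, kk j := by
    have : ∑ j : Fin (n + 1), 1 ≤ ∑ j, kk j := Finset.sum_le_sum fun j _ => hk j
    simp at this
    omega
  have hab := prod_div_bounds kk hk (ω * k) k (by positivity) hlow hhigh
  simp only [Nat.add_sub_cancel] at hab
  have hQ0 : ∀ t, 0 ≤ Qz kk t := fun t => Finset.sum_nonneg fun _ _ => sq_nonneg _
  -- eigenvalue bounds
  have hnn : ∀ i, 0 ≤ hB.eigenvalues hn i := fun i => by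
    refine le_eig hB hn ⊤ 0 i (by rw [finrank_top, hn]; exact i.2) fun t _ => ?_
    rw [zero_mul]
    exact (mul_nonneg hr.le (hQ0 t)).trans (le_B kk α r hα1 t)
  have hz : ∀ i : Fin (∑ j, kk j), (∑ j, kk j) ≤ i + n → hB.eigenvalues hn i = 0 := fun i hi => by
    refine le_antisymm (eig_le hB hn ((LinearMap.ker (sumL (n + 1))).map (blockL kk)) 0 i ?_ ?_)
      (hnn i)
    · have := finrank_K kk hk
      omega
    · intro t ht
      rw [inner_Bmat]
      simp [linF_K kk t ht]
  have htop : ∀ i, hB.eigenvalues hn i ≤ R * (n + 1 : ℕ) * k ^ n := fun i => by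
    refine eig_le hB hn ⊤ _ i (by rw [finrank_top, hn]; omega) fun t _ => ?_
    refine (B_le kk α R hα2 t).trans ?_
    have := mul_le_mul_of_nonneg_left (Qz_le kk hk _ (fun j => (hab j).2) t) hR.le
    linarith
  have hlow0 : ∀ i : Fin (∑ j, kk j), (i : ℕ) = 0 →
      r * ω ^ n * (n + 1 : ℕ) * k ^ n ≤ hB.eigenvalues hn i := fun i hi => by
    refine le_eig hB hn (Submodule.span ℝ {wvec kk}) _ i ?_ fun t ht => ?_
    · rw [finrank_span_singleton, hi]
      · norm_num
      · intro h0
        have h1 : wvec kk ⟨0, ⟨0, hk 0⟩⟩ = 0 := by rw [h0]; rfl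
        have h2 : (kk 0 : ℝ) ≠ 0 := by exact_mod_cast (hk 0).ne'
        simp [wvec] at h1
        exact h2 (by exact_mod_cast h1)
    · obtain ⟨c, rfl⟩ := Submodule.mem_span_singleton.1 ht
      refine le_trans ?_ (le_B kk α r hα1 _)
      have h1 : Qz kk (c • wvec kk) = c ^ 2 * Qz kk (wvec kk) := by
        simp [Qz, Finset.mul_sum, mul_pow]
      rw [h1, norm_smul, mul_pow, Real.norm_eq_abs, sq_abs]
      have := mul_le_mul_of_nonneg_left (le_Qz_w kk hk _ (fun j => (hab j).1))
        (mul_nonneg hr.le (sq_nonneg c))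
      rw [mul_pow] at this
      linarith
  have hup : ∀ i : Fin (∑ j, kk j), 0 < (i : ℕ) → hB.eigenvalues hn i ≤ R * k ^ n := fun i hi => by
    refine eig_le hB hn (LinearMap.ker (∑ j, (kk j : ℝ)⁻¹ • Sm kk j)) _ i ?_ fun t ht => ?_
    · have := finrank_le_ker_add (∑ j, (kk j : ℝ)⁻¹ • Sm kk j)
      rw [hn, Module.finrank_self] at this
      omega
    · refine (B_le kk α R hα2 t).trans ?_
      have h1 : ∑ j, Sm kk j t / kk j = 0 := by
        rw [LinearMap.mem_ker, LinearMap.sum_apply] at ht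
        rw [← ht]
        refine Finset.sum_congr rfl fun j _ => ?_
        simp [div_eq_inv_mul]
      have := mul_le_mul_of_nonneg_left (Qz_le' kk hk _ (fun j => (hab j).2) t h1) hR.le
      linarith
  have hlo : ∀ i : Fin (∑ j, kk j), (i : ℕ) + n < ∑ j, kk j →
      r * ω ^ n * k ^ n ≤ hB.eigenvalues hn i := fun i hi => by
    refine le_eig hB hn (LinearMap.ker (diffL n kk)) _ i ?_ fun t ht => ?_
    · have := finrank_le_ker_add (diffL n kk)
      rw [hn, Module.finrank_fin_fun] at this
      omega
    · refine le_trans ?_ (le_B kk α r hα1 _)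
      have := mul_le_mul_of_nonneg_left
        (le_Qz kk hk _ (fun j => (hab j).1) t _ (diffL_ker n kk t ht)) hr.le
      rw [mul_pow] at this
      linarith
  let σ := reidx (∑ j, kk j) n hd
  have hσ : Function.Injective σ := reidx_inj _ _ hd
  have hσ1 : ∀ i : Fin (∑ j, kk j), (i : ℕ) < n → (σ i : ℕ) = (∑ j, kk j) - 1 - i := by
    intro i hi
    simp only [σ, reidx, dif_pos hi]
  have hσ2 : ∀ i : Fin (∑ j, kk j), n ≤ (i : ℕ) → (σ i : ℕ) = i - n := by
    intro i hi
    simp only [σ, reidx, dif_neg (not_lt.2 hi)]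
  refine ⟨fun i => hB.eigenvectorBasis hn (σ i), fun i => hB.eigenvalues hn (σ i),
    fun i => ?_, fun i i' hii => ?_, fun i => ?_, ?_, fun i hi => ?_, fun i hi => ?_, fun i hi => ?_⟩
  · exact (hB.eigenvectorBasis hn).orthonormal.ne_zero _
  · exact (hB.eigenvectorBasis hn).orthonormal.2 (hσ.ne hii)
  · exact hB.apply_eigenvectorBasis hn _
  · have hs : Function.Surjective σ := Finite.injective_iff_surjective.1 hσ
    have : Set.range (fun i => hB.eigenvectorBasis hn (σ i)) =
        Set.range (hB.eigenvectorBasis hn) := hs.range_comp _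
    rw [this, ← OrthonormalBasis.coe_toBasis]
    exact Module.Basis.span_eq _
  · have h1 := hσ1 i hi
    rw [LinearMap.mem_ker, hB.apply_eigenvectorBasis, hz (σ i) (by omega)]
    simp
  · have h1 := hσ2 i hi.ge
    exact ⟨hlow0 _ (by omega), htop _⟩
  · have h1 := hσ2 i hi.le
    exact ⟨hlo _ (by omega), hup _ (by omega)⟩
end
end

section
/- Let ℳ_1 and ℳ_2 be linear subspaces of ℝ^d, each of codimension ν−1, with ℳ_1 ∩ ker(q) = ℳ_2 ∩ ker(q) = {0}. Then for all indices 1 ≤ m_j, p_j ≤ k_j (j = 1,…,ν), E_1[(τ_{1,m_1}+⋯+τ_{ν,m_ν})(τ_{1,p_1}+⋯+τ_{ν,p_ν})] = E_2[(τ_{1,m_1}+⋯+τ_{ν,m_ν})(τ_{1,p_1}+⋯+τ_{ν,p_ν})], where E_i denotes expectation over the probability distribution with density proportional to e^{−q(t)} restricted to ℳ_i. -/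
open MeasureTheory Real InnerProductSpace

noncomputable section

variable {ν : ℕ}

/-- The expectation of `f` under the probability distribution on a subspace `ℳ` with
density proportional to `e^{−q(t)}`. -/
def expM (kk : Fin ν → ℕ) (M : Submodule ℝ (Spc kk)) (α : MIdx kk → ℝ) (f : Spc kk → ℝ) : ℝ :=
  (∫ t : ↥M, f (t : Spc kk) * Real.exp (-(qform kk α (t : Spc kk)))) /
    (∫ t : ↥M, Real.exp (-(qform kk α (t : Spc kk))))

/-- The common kernel of all the functionals `linF`. -/
def comKer (kk : Fin ν → ℕ) : Submodule ℝ (Spc kk) := ⨅ m : MIdx kk, LinearMap.ker (linF kk m)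

/-- Blockwise constant vectors. -/
def blockC (kk : Fin ν → ℕ) : (Fin ν → ℝ) →ₗ[ℝ] Spc kk where
  toFun c := WithLp.toLp 2 (fun p => c p.1)
  map_add' _ _ := rfl
  map_smul' _ _ := rfl

/-- The sum functional. -/
def sumC (ν : ℕ) : (Fin ν → ℝ) →ₗ[ℝ] ℝ := ∑ j, LinearMap.proj j

theorem mem_comKer (kk : Fin ν → ℕ) (t : Spc kk) : t ∈ comKer kk ↔ ∀ m, linF kk m t = 0 := by
  simp [comKer, Submodule.mem_iInf]

theorem comKer_le (kk : Fin ν → ℕ) (α : MIdx kk → ℝ) :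
    comKer kk ≤ LinearMap.ker (Bmat kk α) := by
  intro t ht
  rw [mem_comKer] at ht
  simp [Bmat, LinearMap.sum_apply, ht]

theorem comKer_dim (kk : Fin ν → ℕ) (hkk : ∀ j, 2 ≤ kk j) :
    ν - 1 ≤ Module.finrank ℝ (comKer kk) := by
  have h1 : Function.Injective (blockC kk) := by
    intro c c' h
    funext j
    have := congrArg (fun t : Spc kk => t ⟨j, ⟨0, by have := hkk j; omega⟩⟩) h
    exact this
  have h2 : (LinearMap.ker (sumC ν)).map (blockC kk) ≤ comKer kk := by
    rintro _ ⟨c, hc, rfl⟩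
    rw [mem_comKer]
    intro m
    have : sumC ν c = 0 := hc
    rw [sumC, LinearMap.sum_apply] at this
    rw [linF, LinearMap.sum_apply]
    exact this
  have h3 := Submodule.finrank_mono h2
  rw [← (Submodule.equivMapOfInjective (blockC kk) h1 (LinearMap.ker (sumC ν))).finrank_eq] at h3
  have h4 := LinearMap.finrank_range_add_finrank_ker (sumC ν)
  have h5 := Submodule.finrank_le (LinearMap.range (sumC ν))
  simp at h4 h5
  omega

theorem comKer_compl (kk : Fin ν → ℕ) (hkk : ∀ j, 2 ≤ kk j) (α : MIdx kk → ℝ)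
    (M : Submodule ℝ (Spc kk))
    (hcodim : Module.finrank ℝ ↥M + (ν - 1) = Module.finrank ℝ (Spc kk))
    (hM : M ⊓ LinearMap.ker (Bmat kk α) = ⊥) : IsCompl (comKer kk) M := by
  have h0 : comKer kk ⊓ M = ⊥ := by
    rw [eq_bot_iff, ← hM, inf_comm]
    exact inf_le_inf_left _ (comKer_le kk α)
  refine ⟨disjoint_iff.2 h0, codisjoint_iff.2 ?_⟩
  apply Submodule.eq_top_of_finrank_eq
  have h1 := Submodule.finrank_sup_add_finrank_inf_eq (comKer kk) M
  rw [h0, finrank_bot] at h1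
  have h2 := comKer_dim kk hkk
  have h3 := Submodule.finrank_le (comKer kk ⊔ M)
  omega

theorem exists_equiv (kk : Fin ν → ℕ) (M₁ M₂ : Submodule ℝ (Spc kk))
    (h₁ : IsCompl (comKer kk) M₁) (h₂ : IsCompl (comKer kk) M₂) :
    ∃ L : M₁ ≃ₗ[ℝ] M₂, ∀ (t : M₁) (m : MIdx kk), linF kk m (L t : Spc kk) = linF kk m t := by
  refine ⟨(Submodule.quotientEquivOfIsCompl _ _ h₁).symm.trans
    (Submodule.quotientEquivOfIsCompl _ _ h₂), fun t m => ?_⟩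
  set L := (Submodule.quotientEquivOfIsCompl _ _ h₁).symm.trans
    (Submodule.quotientEquivOfIsCompl _ _ h₂) with hL
  have h : (Submodule.quotientEquivOfIsCompl _ _ h₂).symm (L t)
      = (Submodule.quotientEquivOfIsCompl _ _ h₁).symm t := by
    rw [hL, LinearEquiv.trans_apply, LinearEquiv.symm_apply_apply]
  simp only [Submodule.quotientEquivOfIsCompl_symm_apply] at h
  rw [Submodule.Quotient.eq, mem_comKer] at h
  have := h m
  rw [map_sub] at this
  linarith

theorem exists_scale {E F : Type*} [NormedAddCommGroup E] [InnerProductSpace ℝ E]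
    [FiniteDimensional ℝ E] [MeasurableSpace E] [BorelSpace E]
    [NormedAddCommGroup F] [InnerProductSpace ℝ F]
    [FiniteDimensional ℝ F] [MeasurableSpace F] [BorelSpace F] (L : E ≃ₗ[ℝ] F) :
    ∃ c : ℝ, c ≠ 0 ∧ ∀ g : F → ℝ, ∫ t : E, g (L t) = c * ∫ t : F, g t := by
  let e : E ≃L[ℝ] F := L.toContinuousLinearEquiv
  have hA : (Measure.map e (volume : Measure E)).IsAddHaarMeasure :=
    e.isAddHaarMeasure_map volume
  let c := Measure.addHaarScalarFactor (Measure.map e (volume : Measure E)) (volume : Measure F)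
  have hc : Measure.map e (volume : Measure E) = c • (volume : Measure F) :=
    Measure.isAddLeftInvariant_eq_smul _ _
  refine ⟨c, ?_, fun g => ?_⟩
  · have := Measure.addHaarScalarFactor_pos_of_isAddHaarMeasure
      (Measure.map e (volume : Measure E)) (volume : Measure F)
    exact_mod_cast this.ne'
  · have h := e.toHomeomorph.measurableEmbedding.integral_map (μ := volume) g
    have h' : ∫ t : E, g (L t) = ∫ y, g y ∂(Measure.map e (volume : Measure E)) := h.symm
    rw [h', hc, integral_smul_nnreal_measure]
    rfl

/-- If `ℳ₁`, `ℳ₂` are subspaces of codimension `ν−1` with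
`ℳ_i ∩ ker(q) = {0}`, then the correlations
`E[(τ_{1,m_1}+⋯+τ_{ν,m_ν})(τ_{1,p_1}+⋯+τ_{ν,p_ν})]` agree for the two distributions
with density proportional to `e^{−q}` on `ℳ₁` and on `ℳ₂`. -/
theorem statement9 (ν : ℕ) (hν : 2 ≤ ν) (kk : Fin ν → ℕ) (hkk : ∀ j, 2 ≤ kk j)
    (α : MIdx kk → ℝ) (hα : ∀ m, 0 < α m)
    (M₁ M₂ : Submodule ℝ (Spc kk))
    (hcodim₁ : Module.finrank ℝ ↥M₁ + (ν - 1) = Module.finrank ℝ (Spc kk))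
    (hcodim₂ : Module.finrank ℝ ↥M₂ + (ν - 1) = Module.finrank ℝ (Spc kk))
    (hMker₁ : M₁ ⊓ LinearMap.ker (Bmat kk α) = ⊥)
    (hMker₂ : M₂ ⊓ LinearMap.ker (Bmat kk α) = ⊥)
    (m p : MIdx kk) :
    expM kk M₁ α (fun t => linF kk m t * linF kk p t)
      = expM kk M₂ α (fun t => linF kk m t * linF kk p t) := by
  obtain ⟨L, hL⟩ := exists_equiv kk M₁ M₂ (comKer_compl kk hkk α M₁ hcodim₁ hMker₁)
    (comKer_compl kk hkk α M₂ hcodim₂ hMker₂)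
  obtain ⟨c, hc, hg⟩ := exists_scale L
  have hq : ∀ t : M₁, qform kk α (L t : Spc kk) = qform kk α (t : Spc kk) := by
    intro t
    simp [qform, hL]
  have e1 := hg (fun t => linF kk m (t : Spc kk) * linF kk p (t : Spc kk) *
    Real.exp (-(qform kk α (t : Spc kk))))
  have e2 := hg (fun t => Real.exp (-(qform kk α (t : Spc kk))))
  simp only [hL, hq] at e1 e2
  unfold expM
  rw [e1, e2, mul_div_mul_left _ _ hc]
end
end
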